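/- Let p/q be an irreducible fraction with 0 < p/q < 1 and q ≥ 2. Then the number of entries equal to 5 in the reduced degree sequence of G_{p/q} is: 3p − q if 1/3 < p/q < 1/2; 2q − 3p if 1/2 < p/q < 2/3; 1 if p/q = 1/3 or p/q = 2/3; and 0 in all remaining cases (in particular for p/q = 1/2 and for p/q outside [1/3, 2/3]). -/

import Mathlib

/-- Symbols for paths in the Farey binary tree. -/
inductive LR
  | L
  | R
deriving DecidableEq

/-- One step in the Farey binary tree: update the current pair of fractions
(represented as pairs (numerator, denominator) of naturals). -/
def fareyStep : ((ℕ × ℕ) × (ℕ × ℕ)) → LR → ((ℕ × ℕ) × (ℕ × ℕ))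
  | ((a, b), (c, d)), LR.L => ((a, b), (a + c, b + d))
  | ((a, b), (c, d)), LR.R => ((a + c, b + d), (c, d))

/-- The final pair of fractions of a word: after reading the first symbol `L`
the current pair is (0/1, 1/1); the remaining symbols update it. -/
def finalPair (w : List LR) : (ℕ × ℕ) × (ℕ × ℕ) :=
  w.tail.foldl fareyStep ((0, 1), (1, 1))

/-- The value ⟨w⟩ of a word: the mediant of its final pair, as (numerator, denominator). -/
def value (w : List LR) : ℕ × ℕ :=
  ((finalPair w).1.1 + (finalPair w).2.1, (finalPair w).1.2 + (finalPair w).2.2)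

/-- A word over {L,R} is a Farey word when its first symbol is `L`. -/
def IsFareyWord (w : List LR) : Prop := w.head? = some LR.L

/-- Concatenation of degree sequences:
[a₁,…,a_s] ⊕ [b₁,…,b_t] = [a₁+1, a₂, …, a_{s−1}, a_s+b₁, b₂, …, b_{t−1}, b_t+1]. -/
def oplus (A B : List ℕ) : List ℕ :=
  (A.dropLast.modifyHead (· + 1)) ++ [A.getLastD 0 + B.headD 0] ++ B.tail.dropLast
    ++ [B.getLastD 0 + 1]

/-- Update of the pair (D(left ancestor), D(right ancestor)) of unreduced degree
sequences along one symbol. -/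
def degStep : (List ℕ × List ℕ) → LR → (List ℕ × List ℕ)
  | (A, B), LR.L => (A, oplus A B)
  | (A, B), LR.R => (oplus A B, B)

/-- The pair (D(a/b), D(c/d)) of unreduced degree sequences of the final pair of a word;
0/1 and 1/1 are both assigned the list [1,1]. -/
def degPair (w : List LR) : List ℕ × List ℕ :=
  w.tail.foldl degStep ([1, 1], [1, 1])

/-- The unreduced degree sequence D(⟨w⟩) = D(a/b) ⊕ D(c/d) of the value of a word. -/
def Dseq (w : List LR) : List ℕ :=
  oplus (degPair w).1 (degPair w).2

/-- Reduction: [k₁,…,k_{q+1}] becomes [k₂,…,k_q, k₁+k_{q+1}]; the last entry is the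
boundary degree and the remaining ones are the inner degrees. -/
def reduce (D : List ℕ) : List ℕ :=
  D.tail.dropLast ++ [D.headD 0 + D.getLastD 0]

/-- The reduced degree sequence of the Haros graph G_{⟨w⟩}. -/
def degSeq (w : List LR) : List ℕ := reduce (Dseq w)

/-- Degree-distribution entropy S of the Haros graph G_{⟨w⟩}:
S = −Σ_k P(k)·ln P(k), summed over the degree values occurring in the reduced
degree sequence, where P(k) = m(k)/q. -/
noncomputable def Sent (w : List LR) : ℝ :=
  -∑ k ∈ (degSeq w).toFinset,
    (((degSeq w).count k : ℝ) / ((value w).2 : ℝ)) *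
      Real.log (((degSeq w).count k : ℝ) / ((value w).2 : ℝ))

/-- Reduced entropy H of the Haros graph G_{⟨w⟩} (with the convention 0·ln 0 = 0,
automatic since Real.log 0 = 0). -/
noncomputable def Hent (w : List LR) : ℝ :=
  let x : ℝ := ((value w).1 : ℝ) / ((value w).2 : ℝ)
  if x ≤ 1 / 2 then
    Sent w + 2 * x * Real.log x + (1 - 2 * x) * Real.log (1 - 2 * x)
  else
    Sent w + 2 * (1 - x) * Real.log (1 - x) + (2 * x - 1) * Real.log (2 * x - 1)

/-- Numerical summary of an unreduced degree sequence: `D` has first entry `h`, last entry `l`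
and `m` entries equal to `5` strictly between them. -/
def HasProfile (D : List ℕ) (h l m : ℕ) : Prop :=
  ∃ I : List ℕ, D = h :: (I ++ [l]) ∧ I.count 5 = m

theorem HasProfile.oplus {A B : List ℕ} {h l m h' l' m' : ℕ} (hA : HasProfile A h l m)
    (hB : HasProfile B h' l' m') :
    HasProfile (oplus A B) (h + 1) (l' + 1) (m + m' + if l + h' = 5 then 1 else 0) := by
  obtain ⟨I, rfl, rfl⟩ := hA
  obtain ⟨J, rfl, rfl⟩ := hB
  refine ⟨I ++ [l + h'] ++ J, ?_, ?_⟩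
  · have hI : h :: (I ++ [l]) = (h :: I) ++ [l] := rfl
    have hJ : h' :: (J ++ [l']) = (h' :: J) ++ [l'] := rfl
    rw [_root_.oplus, hI, List.dropLast_concat, hJ]
    simp [List.getLastD_eq_getLast?, List.getLast?_cons]
  · simp only [List.count_append, List.count_singleton, beq_iff_eq]
    omega

theorem HasProfile.count_reduce {D : List ℕ} {h l m : ℕ} (hD : HasProfile D h l m) :
    (reduce D).count 5 = m + if h + l = 5 then 1 else 0 := by
  obtain ⟨I, rfl, rfl⟩ := hD
  simp [reduce, List.getLastD_eq_getLast?, List.getLast?_cons, List.count_singleton]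

/-- The relation between a Farey pair `a/b < c/d` and the profiles `(h, l, m)`, `(h', l', m')` of
its two degree sequences, according to the position of the pair with respect to
`0, 1/3, 1/2, 2/3, 1`. -/
inductive ProfileInvariant (a b c d h l m h' l' m' : ℕ) : Prop
  | root (H : a = 0 ∧ b = 1 ∧ c = 1 ∧ d = 1 ∧ h = 1 ∧ l = 1 ∧ m = 0 ∧ h' = 1 ∧ l' = 1 ∧ m' = 0)
  | leftEdge
      (H : a = 0 ∧ b = 1 ∧ c = 1 ∧ 2 ≤ d ∧ h = 1 ∧ l = 1 ∧ m = 0 ∧ h' = 2 ∧ l' = d ∧ m' = 0)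
  | rightEdge
      (H : c = 1 ∧ d = 1 ∧ b = a + 1 ∧ 2 ≤ b ∧ h' = 1 ∧ l' = 1 ∧ m' = 0 ∧ l = 2 ∧ h = b ∧ m = 0)
  | belowHalf
      (H : c = 1 ∧ d = 2 ∧ 2 * a < b ∧ m + b = 3 * a ∧ h' = 2 ∧ l' = 2 ∧ m' = 0 ∧ 2 ≤ h ∧ l = 3)
  | aboveHalf
      (H : a = 1 ∧ b = 2 ∧ d < 2 * c ∧ m' + 3 * c = 2 * d ∧ h = 2 ∧ l = 2 ∧ m = 0 ∧ h' = 3 ∧ 2 ≤ l')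
  | innerLow (B : 2 ≤ h ∧ 2 ≤ l' ∧ 5 ≤ h + l ∧ 5 ≤ h' + l' ∧ 6 ≤ l + h')
      (H : 3 * a < b ∧ 3 * c ≤ d ∧ m = 0 ∧ m' = 0)
  | innerMidLow (B : 2 ≤ h ∧ 2 ≤ l' ∧ 5 ≤ h + l ∧ 5 ≤ h' + l' ∧ 6 ≤ l + h')
      (H : 2 * a < b ∧ 2 * c < d ∧ d < 3 * c ∧ m + b = 3 * a ∧ m' + d = 3 * c)
  | innerMidHigh (B : 2 ≤ h ∧ 2 ≤ l' ∧ 5 ≤ h + l ∧ 5 ≤ h' + l' ∧ 6 ≤ l + h')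
      (H : b < 2 * a ∧ d < 2 * c ∧ 3 * a < 2 * b ∧ m + 3 * a = 2 * b ∧ m' + 3 * c = 2 * d)
  | innerHigh (B : 2 ≤ h ∧ 2 ≤ l' ∧ 5 ≤ h + l ∧ 5 ≤ h' + l' ∧ 6 ≤ l + h')
      (H : 2 * b ≤ 3 * a ∧ 2 * d < 3 * c ∧ m = 0 ∧ m' = 0)

theorem ProfileInvariant.left {a b c d h l m h' l' m' : ℕ}
    (H : ProfileInvariant a b c d h l m h' l' m') :
    ProfileInvariant a b (a + c) (b + d) h l m (h + 1) (l' + 1)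
      (m + m' + if l + h' = 5 then 1 else 0) := by
  generalize he : (if l + h' = 5 then 1 else 0) = e
  replace he : l + h' = 5 ∧ e = 1 ∨ l + h' ≠ 5 ∧ e = 0 := by
    split_ifs at he <;> omega
  cases H with
  | root H => apply ProfileInvariant.leftEdge <;> and_intros <;> omega
  | leftEdge H => apply ProfileInvariant.leftEdge <;> and_intros <;> omega
  | rightEdge H =>
    by_cases hx : b = 2
    · apply ProfileInvariant.aboveHalf <;> and_intros <;> omega
    · apply ProfileInvariant.innerHigh <;> and_intros <;> omega
  | belowHalf H => apply ProfileInvariant.innerMidLow <;> and_intros <;> omega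
  | aboveHalf H => apply ProfileInvariant.aboveHalf <;> and_intros <;> omega
  | innerLow B H => apply ProfileInvariant.innerLow <;> and_intros <;> omega
  | innerMidLow B H => apply ProfileInvariant.innerMidLow <;> and_intros <;> omega
  | innerMidHigh B H => apply ProfileInvariant.innerMidHigh <;> and_intros <;> omega
  | innerHigh B H => apply ProfileInvariant.innerHigh <;> and_intros <;> omega

theorem ProfileInvariant.right {a b c d h l m h' l' m' : ℕ}
    (H : ProfileInvariant a b c d h l m h' l' m') :
    ProfileInvariant (a + c) (b + d) c d (h + 1) (l' + 1)
      (m + m' + if l + h' = 5 then 1 else 0) h' l' m' := by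
  generalize he : (if l + h' = 5 then 1 else 0) = e
  replace he : l + h' = 5 ∧ e = 1 ∨ l + h' ≠ 5 ∧ e = 0 := by
    split_ifs at he <;> omega
  cases H with
  | root H => apply ProfileInvariant.rightEdge <;> and_intros <;> omega
  | leftEdge H =>
    by_cases hx : d = 2
    · apply ProfileInvariant.belowHalf <;> and_intros <;> omega
    · apply ProfileInvariant.innerLow <;> and_intros <;> omega
  | rightEdge H => apply ProfileInvariant.rightEdge <;> and_intros <;> omega
  | belowHalf H => apply ProfileInvariant.belowHalf <;> and_intros <;> omega
  | aboveHalf H => apply ProfileInvariant.innerMidHigh <;> and_intros <;> omega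
  | innerLow B H => apply ProfileInvariant.innerLow <;> and_intros <;> omega
  | innerMidLow B H => apply ProfileInvariant.innerMidLow <;> and_intros <;> omega
  | innerMidHigh B H => apply ProfileInvariant.innerMidHigh <;> and_intros <;> omega
  | innerHigh B H => apply ProfileInvariant.innerHigh <;> and_intros <;> omega

theorem ProfileInvariant.foldl (u : List LR) {a b c d h l m h' l' m' : ℕ} {A B : List ℕ}
    (hA : HasProfile A h l m) (hB : HasProfile B h' l' m')
    (H : ProfileInvariant a b c d h l m h' l' m') :
    let P := u.foldl fareyStep ((a, b), (c, d))
    let Q := u.foldl degStep (A, B)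
    ∃ h l m h' l' m' : ℕ, HasProfile Q.1 h l m ∧ HasProfile Q.2 h' l' m' ∧
      ProfileInvariant P.1.1 P.1.2 P.2.1 P.2.2 h l m h' l' m' := by
  induction u generalizing a b c d h l m h' l' m' A B with
  | nil => exact ⟨h, l, m, h', l', m', hA, hB, H⟩
  | cons s u ih =>
    cases s with
    | L => exact ih hA (hA.oplus hB) H.left
    | R => exact ih (hA.oplus hB) hB H.right

/-- the number of entries equal to 5 in the reduced degree sequence of
G_{p/q} is 3p − q if 1/3 < p/q < 1/2, is 2q − 3p if 1/2 < p/q < 2/3, is 1 if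
p/q = 1/3 or p/q = 2/3, and is 0 in all remaining cases. -/
theorem statement2 (p q : ℕ) (hcop : Nat.Coprime p q) (hp : 0 < p) (hpq : p < q)
    (hq2 : 2 ≤ q) (w : List LR) (hw : IsFareyWord w) (hval : value w = (p, q)) :
    (q < 3 * p → 2 * p < q → (degSeq w).count 5 = 3 * p - q) ∧
    (q < 2 * p → 3 * p < 2 * q → (degSeq w).count 5 = 2 * q - 3 * p) ∧
    (3 * p = q ∨ 3 * p = 2 * q → (degSeq w).count 5 = 1) ∧
    (¬(q < 3 * p ∧ 2 * p < q) → ¬(q < 2 * p ∧ 3 * p < 2 * q) →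
      3 * p ≠ q → 3 * p ≠ 2 * q → (degSeq w).count 5 = 0) := by
  have hone : HasProfile [1, 1] 1 1 0 := ⟨[], rfl, rfl⟩
  obtain ⟨h, l, m, h', l', m', hA, hB, H⟩ :=
    ProfileInvariant.foldl w.tail hone hone
      (show ProfileInvariant 0 1 1 1 1 1 0 1 1 0 from .root (by omega))
  have hcount : (degSeq w).count 5 = _ := (hA.oplus hB).count_reduce
  obtain ⟨rfl, rfl⟩ := Prod.mk.inj hval
  rw [hcount]
  change ProfileInvariant (finalPair w).1.1 (finalPair w).1.2 (finalPair w).2.1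
    (finalPair w).2.2 h l m h' l' m' at H
  clear hcount hval hcop hA hB hone
  generalize (finalPair w).1.1 = a at *
  generalize (finalPair w).1.2 = b at *
  generalize (finalPair w).2.1 = c at *
  generalize (finalPair w).2.2 = d at *
  refine ⟨fun _ _ => ?_, fun _ _ => ?_, fun _ => ?_, fun _ _ _ _ => ?_⟩ <;>
    cases H <;> split_ifs <;> omega
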